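/- arXiv:1705.08074 — 2 statements merged into one kernel-verified Lean document; each statement's English description precedes it below -/
import Mathlib

section
/- If a measure ξ is universally optimal, then q*_ξ = y*, x* = −c_{ξ01}/c_{ξ11}, and the support {s ∈ S : p_s > 0} of ξ is contained in Q. -/
open Matrix

namespace TwoDim

/-- The set of plots of an `a × b` block. -/
abbrev Plot (a b : ℕ) := Fin a × Fin b

/-- A block array: an assignment of one of `t` treatments to each plot. -/
abbrev BlockArray (a b t : ℕ) := Plot a b → Fin t

/-- The all-ones matrix. -/
def Jmat (n : Type*) : Matrix n n ℝ := Matrix.of fun _ _ => 1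

/-- `B_m = I - J/m`. -/
noncomputable def Bmat (n : Type*) [Fintype n] [DecidableEq n] : Matrix n n ℝ :=
  1 - ((Fintype.card n : ℝ))⁻¹ • Jmat n

variable {a b t : ℕ}

/-- The treatment incidence matrix `T_s`. -/
def Tmat (s : BlockArray a b t) : Matrix (Plot a b) (Fin t) ℝ :=
  Matrix.of fun q k => if s q = k then 1 else 0

/-- Two plots are neighbors if they agree in one coordinate and differ by 1 in the other. -/
def Neighbor (q r : Plot a b) : Prop :=
  (q.1 = r.1 ∧ (q.2.val + 1 = r.2.val ∨ r.2.val + 1 = q.2.val)) ∨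
  (q.2 = r.2 ∧ (q.1.val + 1 = r.1.val ∨ r.1.val + 1 = q.1.val))

instance (q r : Plot a b) : Decidable (Neighbor q r) := by
  unfold Neighbor; infer_instance

/-- The adjacency matrix of the neighbor relation. -/
def Mmat (a b : ℕ) : Matrix (Plot a b) (Plot a b) ℝ :=
  Matrix.of fun q r => if Neighbor q r then 1 else 0

/-- `F_s = M T_s`. -/
def Fmat (s : BlockArray a b t) : Matrix (Plot a b) (Fin t) ℝ :=
  Mmat a b * Tmat s

/-- `B̃ = Σ⁻¹ − Σ⁻¹ J Σ⁻¹ / (1'Σ⁻¹1)`. -/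
noncomputable def Btilde (Sig : Matrix (Plot a b) (Plot a b) ℝ) :
    Matrix (Plot a b) (Plot a b) ℝ :=
  Sig⁻¹ - (∑ i, ∑ j, Sig⁻¹ i j)⁻¹ • (Sig⁻¹ * Jmat (Plot a b) * Sig⁻¹)

/-- `C_{s00} = T_s' W T_s` (with `W` playing the role of `B̃`). -/
def Cs00 (W : Matrix (Plot a b) (Plot a b) ℝ) (s : BlockArray a b t) :
    Matrix (Fin t) (Fin t) ℝ := (Tmat s)ᵀ * W * Tmat s

/-- `C_{s01} = T_s' W F_s`. -/
def Cs01 (W : Matrix (Plot a b) (Plot a b) ℝ) (s : BlockArray a b t) :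
    Matrix (Fin t) (Fin t) ℝ := (Tmat s)ᵀ * W * Fmat s

/-- `C_{s11} = F_s' W F_s`. -/
def Cs11 (W : Matrix (Plot a b) (Plot a b) ℝ) (s : BlockArray a b t) :
    Matrix (Fin t) (Fin t) ℝ := (Fmat s)ᵀ * W * Fmat s

/-- `c_{s00} = tr(B_t C_{s00})`. -/
noncomputable def cs00 (W : Matrix (Plot a b) (Plot a b) ℝ) (s : BlockArray a b t) : ℝ :=
  Matrix.trace (Bmat (Fin t) * Cs00 W s)

noncomputable def cs01 (W : Matrix (Plot a b) (Plot a b) ℝ) (s : BlockArray a b t) : ℝ :=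
  Matrix.trace (Bmat (Fin t) * Cs01 W s)

noncomputable def cs11 (W : Matrix (Plot a b) (Plot a b) ℝ) (s : BlockArray a b t) : ℝ :=
  Matrix.trace (Bmat (Fin t) * Cs11 W s)

/-- The quadratic `q_s(x) = c_{s00} + 2 c_{s01} x + c_{s11} x²`. -/
noncomputable def qpoly (W : Matrix (Plot a b) (Plot a b) ℝ) (s : BlockArray a b t) (x : ℝ) : ℝ :=
  cs00 W s + 2 * cs01 W s * x + cs11 W s * x ^ 2

/-- A measure on the set of block arrays: nonnegative weights summing to one. -/
def IsMeasure (ξ : BlockArray a b t → ℝ) : Prop :=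
  (∀ s, 0 ≤ ξ s) ∧ ∑ s, ξ s = 1

noncomputable def Cm00 (W : Matrix (Plot a b) (Plot a b) ℝ) (ξ : BlockArray a b t → ℝ) :
    Matrix (Fin t) (Fin t) ℝ := ∑ s, ξ s • Cs00 W s

noncomputable def Cm01 (W : Matrix (Plot a b) (Plot a b) ℝ) (ξ : BlockArray a b t → ℝ) :
    Matrix (Fin t) (Fin t) ℝ := ∑ s, ξ s • Cs01 W s

noncomputable def Cm11 (W : Matrix (Plot a b) (Plot a b) ℝ) (ξ : BlockArray a b t → ℝ) :
    Matrix (Fin t) (Fin t) ℝ := ∑ s, ξ s • Cs11 W s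

noncomputable def cm00 (W : Matrix (Plot a b) (Plot a b) ℝ) (ξ : BlockArray a b t → ℝ) : ℝ :=
  ∑ s, ξ s * cs00 W s

noncomputable def cm01 (W : Matrix (Plot a b) (Plot a b) ℝ) (ξ : BlockArray a b t → ℝ) : ℝ :=
  ∑ s, ξ s * cs01 W s

noncomputable def cm11 (W : Matrix (Plot a b) (Plot a b) ℝ) (ξ : BlockArray a b t → ℝ) : ℝ :=
  ∑ s, ξ s * cs11 W s

/-- `q*_ξ = c_{ξ00} − c_{ξ01}²/c_{ξ11}`. -/
noncomputable def qstar (W : Matrix (Plot a b) (Plot a b) ℝ) (ξ : BlockArray a b t → ℝ) : ℝ :=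
  cm00 W ξ - (cm01 W ξ) ^ 2 / cm11 W ξ

/-- `G` is a generalized inverse of `A`. -/
def IsGenInv (A G : Matrix (Fin t) (Fin t) ℝ) : Prop := A * G * A = A

/-- Information matrix `C_{ξ00} − C_{ξ01} G C_{ξ10}` computed with a generalized inverse `G`. -/
noncomputable def InfoMat (W : Matrix (Plot a b) (Plot a b) ℝ) (ξ : BlockArray a b t → ℝ)
    (G : Matrix (Fin t) (Fin t) ℝ) : Matrix (Fin t) (Fin t) ℝ :=
  Cm00 W ξ - Cm01 W ξ * G * (Cm01 W ξ)ᵀ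

/-- A criterion `Φ` on `t×t` real symmetric matrices: concave, Loewner-nondecreasing, and
invariant under simultaneous permutations of rows and columns. -/
def GoodPhi (t : ℕ) (Φ : Matrix (Fin t) (Fin t) ℝ → ℝ) : Prop :=
  (∀ A B : Matrix (Fin t) (Fin t) ℝ, A.IsSymm → B.IsSymm → ∀ α : ℝ, 0 ≤ α → α ≤ 1 →
      α * Φ A + (1 - α) * Φ B ≤ Φ (α • A + (1 - α) • B)) ∧
  (∀ A B : Matrix (Fin t) (Fin t) ℝ, A.IsSymm → B.IsSymm → (B - A).PosSemidef → Φ A ≤ Φ B) ∧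
  (∀ (σ : Equiv.Perm (Fin t)) (C : Matrix (Fin t) (Fin t) ℝ), Φ (C.submatrix σ σ) = Φ C)

/-- Universal optimality of a measure `ξ`. -/
def UnivOptimal (W : Matrix (Plot a b) (Plot a b) ℝ) (ξ : BlockArray a b t → ℝ) : Prop :=
  ∀ η : BlockArray a b t → ℝ, IsMeasure η →
    ∀ G H : Matrix (Fin t) (Fin t) ℝ, IsGenInv (Cm11 W ξ) G → IsGenInv (Cm11 W η) H →
      ∀ Φ : Matrix (Fin t) (Fin t) ℝ → ℝ, GoodPhi t Φ →
        Φ (InfoMat W η H) ≤ Φ (InfoMat W ξ G)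

/-- A measure is symmetric if it is invariant under relabeling of the treatments. -/
def IsSymmetricMeasure (ξ : BlockArray a b t → ℝ) : Prop :=
  ∀ (σ : Equiv.Perm (Fin t)) (s : BlockArray a b t), ξ (fun q => σ (s q)) = ξ s

/-- A matrix is completely symmetric if it is of the form `αI + βJ`. -/
def ComplSym (A : Matrix (Fin t) (Fin t) ℝ) : Prop :=
  ∃ α β : ℝ, A = α • (1 : Matrix (Fin t) (Fin t) ℝ) + β • Jmat (Fin t)

/-- A measure is pseudo symmetric if `C_{ξ00}`, `C_{ξ01}`, `C_{ξ11}` are completely symmetric. -/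
def PseudoSym (W : Matrix (Plot a b) (Plot a b) ℝ) (ξ : BlockArray a b t → ℝ) : Prop :=
  ComplSym (Cm00 W ξ) ∧ ComplSym (Cm01 W ξ) ∧ ComplSym (Cm11 W ξ)

/-- `r(x) = max_{s∈S} q_s(x)`. -/
noncomputable def rfun {a b : ℕ} (t : ℕ) (W : Matrix (Plot a b) (Plot a b) ℝ) (x : ℝ) : ℝ :=
  sSup (Set.range fun s : BlockArray a b t => qpoly W s x)

/-- `min_{s∈S} q_s(x)`. -/
noncomputable def rmin {a b : ℕ} (t : ℕ) (W : Matrix (Plot a b) (Plot a b) ℝ) (x : ℝ) : ℝ :=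
  sInf (Set.range fun s : BlockArray a b t => qpoly W s x)

/-- Number of plots assigned treatment `k` by `s`. -/
noncomputable def f0 (s : BlockArray a b t) (k : Fin t) : ℕ :=
  {q : Plot a b | s q = k}.ncard

/-- Replications of `k` among the columns `1,…,b−1`. -/
noncomputable def f1 (s : BlockArray a b t) (k : Fin t) : ℕ :=
  {q : Plot a b | s q = k ∧ q.2.val + 1 < b}.ncard

/-- Replications of `k` among the columns `2,…,b`. -/
noncomputable def f2 (s : BlockArray a b t) (k : Fin t) : ℕ :=
  {q : Plot a b | s q = k ∧ 1 ≤ q.2.val}.ncard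

/-- Replications of `k` among the rows `1,…,a−1`. -/
noncomputable def f3 (s : BlockArray a b t) (k : Fin t) : ℕ :=
  {q : Plot a b | s q = k ∧ q.1.val + 1 < a}.ncard

/-- Replications of `k` among the rows `2,…,a`. -/
noncomputable def f4 (s : BlockArray a b t) (k : Fin t) : ℕ :=
  {q : Plot a b | s q = k ∧ 1 ≤ q.1.val}.ncard

noncomputable def fc (s : BlockArray a b t) : ℕ → Fin t → ℕ
  | 0 => f0 s
  | 1 => f1 s
  | 2 => f2 s
  | 3 => f3 s
  | 4 => f4 s
  | _ => fun _ => 0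

/-- `h^{uv}_s = Σ_k f^u_{s,k} f^v_{s,k}`. -/
noncomputable def hval (s : BlockArray a b t) (u v : ℕ) : ℝ :=
  ∑ k : Fin t, (fc s u k : ℝ) * (fc s v k : ℝ)

noncomputable def h00 (s : BlockArray a b t) : ℝ := hval s 0 0

noncomputable def h1 (s : BlockArray a b t) : ℝ :=
  hval s 0 1 + hval s 0 2 + hval s 0 3 + hval s 0 4

noncomputable def h2 (s : BlockArray a b t) : ℝ :=
  hval s 1 1 + hval s 2 2 + hval s 3 3 + hval s 4 4

noncomputable def h3 (s : BlockArray a b t) : ℝ :=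
  hval s 1 2 + hval s 1 3 + hval s 1 4 + hval s 2 3 + hval s 2 4 + hval s 3 4

/-- `z¹_{s,r}`: horizontally adjacent pairs of plots receiving the same treatment. -/
noncomputable def zr1 (s : BlockArray a b t) : ℕ :=
  {qr : Plot a b × Plot a b |
    qr.1.1 = qr.2.1 ∧ qr.1.2.val + 1 = qr.2.2.val ∧ s qr.1 = s qr.2}.ncard

noncomputable def zr2 (s : BlockArray a b t) : ℕ :=
  {qr : Plot a b × Plot a b |
    qr.1.1 = qr.2.1 ∧ qr.1.2.val + 2 = qr.2.2.val ∧ s qr.1 = s qr.2}.ncard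

noncomputable def zc1 (s : BlockArray a b t) : ℕ :=
  {qr : Plot a b × Plot a b |
    qr.1.2 = qr.2.2 ∧ qr.1.1.val + 1 = qr.2.1.val ∧ s qr.1 = s qr.2}.ncard

noncomputable def zc2 (s : BlockArray a b t) : ℕ :=
  {qr : Plot a b × Plot a b |
    qr.1.2 = qr.2.2 ∧ qr.1.1.val + 2 = qr.2.1.val ∧ s qr.1 = s qr.2}.ncard

/-- pairs `(i,j)`, `(i−1,j+1)` with the same treatment. -/
noncomputable def zd1 (s : BlockArray a b t) : ℕ :=
  {qr : Plot a b × Plot a b |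
    qr.2.1.val + 1 = qr.1.1.val ∧ qr.1.2.val + 1 = qr.2.2.val ∧ s qr.1 = s qr.2}.ncard

/-- pairs `(i,j)`, `(i+1,j+1)` with the same treatment. -/
noncomputable def zd2 (s : BlockArray a b t) : ℕ :=
  {qr : Plot a b × Plot a b |
    qr.1.1.val + 1 = qr.2.1.val ∧ qr.1.2.val + 1 = qr.2.2.val ∧ s qr.1 = s qr.2}.ncard

noncomputable def z1 (s : BlockArray a b t) : ℝ := 2 * zr1 s + 2 * zc1 s

noncomputable def z2 (s : BlockArray a b t) : ℝ :=
  2 * zr2 s + 2 * zc2 s + 4 * zd1 s + 4 * zd2 s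

/-- `η = 4p − 2a − 2b − 2(8ab − 7a − 7b + 4)/t + 4(2p − a − b)²/(pt)` where `p = ab`. -/
noncomputable def eta (a b t : ℕ) : ℝ :=
  4 * ((a : ℝ) * b) - 2 * a - 2 * b - 2 * (8 * (a : ℝ) * b - 7 * a - 7 * b + 4) / t +
    4 * (2 * (a : ℝ) * b - a - b) ^ 2 / (((a : ℝ) * b) * t)

/-- A corner plot of the `a × b` block. -/
def IsCorner (q : Plot a b) : Prop :=
  (q.1.val = 0 ∨ q.1.val + 1 = a) ∧ (q.2.val = 0 ∨ q.2.val + 1 = b)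

/-- Treatment `k` is significant in `s`: it occupies exactly two plots, which are
neighbors, at least one of them being a corner plot. -/
def Significant (s : BlockArray a b t) (k : Fin t) : Prop :=
  ∃ u v : Plot a b, u ≠ v ∧ {q : Plot a b | s q = k} = {u, v} ∧
    Neighbor u v ∧ (IsCorner u ∨ IsCorner v)

/-- Treatment `k` is strictly significant in `s`: both of its two plots are corners. -/
def StrictSignificant (s : BlockArray a b t) (k : Fin t) : Prop :=
  ∃ u v : Plot a b, u ≠ v ∧ {q : Plot a b | s q = k} = {u, v} ∧
    Neighbor u v ∧ IsCorner u ∧ IsCorner v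

/-- `Q_i`: block arrays with exactly `i` significant treatments in which every other
treatment appears at most once. -/
def Qset (a b t : ℕ) (i : ℕ) : Set (BlockArray a b t) :=
  {s | {k : Fin t | Significant s k}.ncard = i ∧
       ∀ k : Fin t, ¬ Significant s k → f0 s k ≤ 1}

/-- `Q_j*`: members of `Q_j` whose significant treatments are all strictly significant. -/
def QsetStar (a b t : ℕ) (j : ℕ) : Set (BlockArray a b t) :=
  {s | s ∈ Qset a b t j ∧ ∀ k : Fin t, Significant s k → StrictSignificant s k}

/-- Treatment `k` is connected in `s`. -/
def ConnectedIn (s : BlockArray a b t) (k : Fin t) : Prop :=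
  ∀ q r : Plot a b, s q = k → s r = k →
    Relation.ReflTransGen (fun u v => Neighbor u v ∧ s u = k ∧ s v = k) q r

/-!
Universal optimality is used only through the criterion `C ↦ tr (B_t C)`. For every measure `ξ`
and every `x`, completing the square writes the average `∑ p_s q_s(x)` as
`tr (B_t (C_{ξ00} - C_{ξ01} G C_{ξ10}))` plus the trace of a positive semidefinite matrix. That
remainder vanishes if `ξ` is invariant under relabeling the treatments and `x` is critical for the
averaged quadratic, since `B_t (C_{ξ01} + x C_{ξ11})` is then a multiple of `B_t` with trace zero.

At the minimizer `x*` of `r`, some convex combination of the active `q_s` has derivative zero.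
Averaged over all relabelings, it becomes a measure whose criterion value is `y*`, so the averaged
quadratic of an optimal `ξ` is at least `y*` everywhere. As it is at most `r(x*) = y*` at `x*`, its
vertex is `(x*, y*)` and every `s` in the support attains `y*`.

The vertex is unique because `c_{s11} > 0`: otherwise all rows of `F_s B_t` would coincide, so the
numbers of neighbors of any two plots would be congruent modulo `t`, whereas those of the first two
plots of a row differ by one.
-/

section GeneralizedInverse

theorem exists_comp_comp_eq_self {K V V' : Type*} [DivisionRing K] [AddCommGroup V] [Module K V]
    [AddCommGroup V'] [Module K V'] (f : V →ₗ[K] V') : ∃ g : V' →ₗ[K] V, f ∘ₗ g ∘ₗ f = f := by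
  obtain ⟨g, hg⟩ := f.rangeRestrict.exists_rightInverse_of_surjective f.range_rangeRestrict
  obtain ⟨h, hh⟩ := g.exists_extend
  refine ⟨h, LinearMap.ext fun v => ?_⟩
  have hv : h (f v) = g (f.rangeRestrict v) := LinearMap.congr_fun hh (f.rangeRestrict v)
  simpa [hv] using congrArg Subtype.val (LinearMap.congr_fun hg (f.rangeRestrict v))

variable {m n : Type*} [Fintype n]

theorem exists_mul_mul_eq_self {K : Type*} [Field K] [Fintype m] (A : Matrix m n K) :
    ∃ G : Matrix n m K, A * G * A = A := by
  classical
  obtain ⟨g, hg⟩ := exists_comp_comp_eq_self (toLin' A)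
  refine ⟨LinearMap.toMatrix' g, toLin'.injective ?_⟩
  rw [toLin'_mul, toLin'_mul, toLin'_toMatrix', LinearMap.comp_assoc, hg]

open scoped ComplexOrder in
theorem mulVec_eq_zero_of_posSemidef_fromBlocks {𝕜 : Type*} [RCLike 𝕜] [Finite m]
    {A : Matrix m m 𝕜} {N : Matrix m n 𝕜} {L : Matrix n m 𝕜} {D : Matrix n n 𝕜}
    (h : (fromBlocks A N L D).PosSemidef) {v : n → 𝕜} (hv : D *ᵥ v = 0) : N *ᵥ v = 0 := by
  have := Fintype.ofFinite m
  have hblock : fromBlocks A N L D *ᵥ Sum.elim 0 v = Sum.elim (N *ᵥ v) 0 := by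
    simp [fromBlocks_mulVec, hv]
  have hzero : fromBlocks A N L D *ᵥ Sum.elim 0 v = 0 := by
    rw [← h.dotProduct_mulVec_zero_iff, hblock]
    simp [dotProduct]
  ext i
  simpa [hblock] using congrFun hzero (Sum.inl i)

open scoped ComplexOrder in
theorem mul_mul_eq_of_posSemidef_fromBlocks {𝕜 : Type*} [RCLike 𝕜] [Finite m]
    {A : Matrix m m 𝕜} {N : Matrix m n 𝕜} {L : Matrix n m 𝕜} {D G : Matrix n n 𝕜}
    (h : (fromBlocks A N L D).PosSemidef) (hG : D * G * D = D) : N * G * D = N := by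
  refine ext_iff_mulVec.2 fun v => ?_
  have hker : D *ᵥ ((G * D) *ᵥ v - v) = 0 := by
    rw [mulVec_sub, mulVec_mulVec, ← Matrix.mul_assoc, hG, sub_self]
  have := mulVec_eq_zero_of_posSemidef_fromBlocks h hker
  rwa [mulVec_sub, mulVec_mulVec, ← Matrix.mul_assoc, sub_eq_zero] at this

theorem complete_square_of_mul_mul_eq {R : Type*} [CommRing R] {N X : Matrix m n R}
    {D G : Matrix n n R} (hD : D.IsSymm) (hG : N * G * D = N) :
    (N * G + X) * D * (N * G + X)ᵀ = N * G * Nᵀ + N * Xᵀ + X * Nᵀ + X * D * Xᵀ := by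
  have hGt : D * (N * G)ᵀ = Nᵀ := by
    conv_rhs => rw [← hG, transpose_mul, hD.eq]
  have hsq : N * (N * G)ᵀ = N * G * Nᵀ := by rw [← hGt, ← Matrix.mul_assoc, hG]
  rw [transpose_add, Matrix.add_mul, hG, Matrix.mul_add, Matrix.add_mul, Matrix.add_mul, hsq,
    Matrix.mul_assoc X D, hGt]
  abel

end GeneralizedInverse

section Minimax

open Set Filter Topology

variable {ι : Type*} {f : ι → ℝ → ℝ} {f' : ι → ℝ} {x y : ℝ}

theorem exists_eq_and_nonneg_deriv [Finite ι] (hf : ∀ i, HasDerivAt (f i) (f' i) x)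
    (hy : ∀ i, f i x ≤ y) (hmin : ∀ᶠ z in 𝓝 x, ∃ i, y ≤ f i z) :
    ∃ i, f i x = y ∧ 0 ≤ f' i := by
  by_contra! hneg
  have hlt (i : ι) : ∀ᶠ z in 𝓝[>] x, f i z < y := by
    rcases (hy i).lt_or_eq with hi | hi
    · exact (hf i).continuousAt.continuousWithinAt.eventually_lt_const hi
    · filter_upwards [(hf i).hasDerivWithinAt.limsup_slope_le' self_notMem_Ioi (hneg i hi),
        self_mem_nhdsWithin] with z hslope hz
      exact hi ▸ (slope_neg_iff_of_le (mem_Ioi.1 hz).le).1 hslope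
  obtain ⟨z, hz, i, hi⟩ := ((eventually_all.2 hlt).and (hmin.filter_mono nhdsWithin_le_nhds)).exists
  exact (hz i).not_ge hi

theorem exists_eq_and_deriv_nonpos [Finite ι] (hf : ∀ i, HasDerivAt (f i) (f' i) x)
    (hy : ∀ i, f i x ≤ y) (hmin : ∀ᶠ z in 𝓝 x, ∃ i, y ≤ f i z) :
    ∃ i, f i x = y ∧ f' i ≤ 0 := by
  have htends : Tendsto Neg.neg (𝓝 (-x)) (𝓝 x) := by
    simpa using continuous_neg.tendsto (-x)
  have hf_neg (i : ι) : HasDerivAt (fun z => f i (-z)) (-f' i) (-x) := by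
    simpa [Function.comp_def] using
      HasDerivAt.comp (-x) (by simpa using hf i) (hasDerivAt_neg (-x))
  obtain ⟨i, hi, hi'⟩ :=
    exists_eq_and_nonneg_deriv hf_neg (by simpa using hy) (htends.eventually hmin)
  exact ⟨i, by simpa using hi, by simpa using hi'⟩

theorem exists_mem_stdSimplex_sum_mul_deriv_eq_zero [Fintype ι]
    (hf : ∀ i, HasDerivAt (f i) (f' i) x) (hy : ∀ i, f i x ≤ y)
    (hmin : ∀ᶠ z in 𝓝 x, ∃ i, y ≤ f i z) :
    ∃ w ∈ stdSimplex ℝ ι, ∑ i, w i * f i x = y ∧ ∑ i, w i * f' i = 0 := by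
  classical
  obtain ⟨i, hi, hi'⟩ := exists_eq_and_nonneg_deriv hf hy hmin
  obtain ⟨j, hj, hj'⟩ := exists_eq_and_deriv_nonpos hf hy hmin
  obtain ⟨α, β, hα, hβ, hαβ, h0⟩ : (0 : ℝ) ∈ segment ℝ (f' j) (f' i) := by
    rw [segment_eq_Icc (hj'.trans hi')]
    exact ⟨hj', hi'⟩
  refine ⟨α • Pi.single j 1 + β • Pi.single i 1, convex_stdSimplex ℝ ι (single_mem_stdSimplex ℝ j)
    (single_mem_stdSimplex ℝ i) hα hβ hαβ, ?_, ?_⟩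
  · have hy_split : α * y + β * y = y := by rw [← add_mul, hαβ, one_mul]
    simpa [add_mul, Finset.sum_add_distrib, Pi.single_apply, ite_mul, hi, hj] using hy_split
  · simpa [add_mul, Finset.sum_add_distrib, Pi.single_apply] using h0

end Minimax

section Centering

variable {n : Type*}

theorem transpose_Jmat : (Jmat n)ᵀ = Jmat n := rfl

variable [Fintype n]

theorem Jmat_mul_apply {m : Type*} (A : Matrix n m ℝ) (i : n) (j : m) :
    (Jmat n * A) i j = ∑ k, A k j := by
  simp [Jmat, mul_apply]

theorem Jmat_mul_Jmat : Jmat n * Jmat n = (Fintype.card n : ℝ) • Jmat n := by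
  ext i j
  rw [Jmat_mul_apply]
  simp [Jmat]

variable [DecidableEq n]

theorem transpose_Bmat : (Bmat n)ᵀ = Bmat n := by
  simp [Bmat, transpose_Jmat]

theorem mul_Bmat_apply {m : Type*} (A : Matrix m n ℝ) (i : m) (j : n) :
    (A * Bmat n) i j = A i j - (Fintype.card n : ℝ)⁻¹ * ∑ k, A i k := by
  simp only [Bmat, Matrix.mul_sub, Matrix.mul_one, Matrix.mul_smul, Matrix.sub_apply,
    Matrix.smul_apply, smul_eq_mul]
  simp [Jmat, mul_apply]

theorem Bmat_mul_Jmat : Bmat n * Jmat n = 0 := by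
  cases isEmpty_or_nonempty n
  · exact Subsingleton.elim _ _
  · simp [Bmat, Matrix.sub_mul, Jmat_mul_Jmat, smul_smul]

theorem Bmat_mul_Bmat : Bmat n * Bmat n = Bmat n := by
  conv_lhs => rw [Bmat.eq_def n, Matrix.mul_sub, Matrix.mul_smul]
  rw [← Bmat, Bmat_mul_Jmat, smul_zero, sub_zero, Matrix.mul_one]

theorem posSemidef_Bmat : (Bmat n).PosSemidef := by
  simpa [conjTranspose_eq_transpose_of_trivial, transpose_Bmat, Bmat_mul_Bmat] using
    posSemidef_conjTranspose_mul_self (Bmat n)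

variable (n) in
/-- The criterion `C ↦ tr (B_n C)` on square matrices, which sends the information matrices
`C_{suv}` to the numbers `c_{suv}`; bundled as a linear map. -/
noncomputable def centeredTrace : Matrix n n ℝ →ₗ[ℝ] ℝ :=
  traceLinearMap n ℝ ℝ ∘ₗ LinearMap.mulLeft ℝ (Bmat n)

theorem centeredTrace_apply (C : Matrix n n ℝ) : centeredTrace n C = (Bmat n * C).trace := rfl

theorem centeredTrace_transpose (C : Matrix n n ℝ) : centeredTrace n Cᵀ = centeredTrace n C := by
  rw [centeredTrace_apply, ← trace_transpose, transpose_mul, transpose_transpose, transpose_Bmat,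
    trace_mul_comm, centeredTrace_apply]

theorem centeredTrace_submatrix (σ : Equiv.Perm n) (C : Matrix n n ℝ) :
    centeredTrace n (C.submatrix σ σ) = centeredTrace n C := by
  have hB : Bmat n = (Bmat n).submatrix σ σ := by ext i j; simp [Bmat, Jmat, one_apply]
  rw [centeredTrace_apply, hB, submatrix_mul_equiv, centeredTrace_apply]
  exact Equiv.sum_comp σ fun i => (Bmat n * C) i i

theorem centeredTrace_eq_trace_mul_mul_transpose (C : Matrix n n ℝ) :
    centeredTrace n C = (Bmat n * C * (Bmat n)ᵀ).trace := by
  rw [transpose_Bmat, trace_mul_comm, ← Matrix.mul_assoc, Bmat_mul_Bmat, centeredTrace_apply]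

theorem centeredTrace_nonneg {C : Matrix n n ℝ} (hC : C.PosSemidef) : 0 ≤ centeredTrace n C := by
  rw [centeredTrace_eq_trace_mul_mul_transpose, ← conjTranspose_eq_transpose_of_trivial]
  exact (hC.mul_mul_conjTranspose_same (Bmat n)).trace_nonneg

theorem goodPhi_centeredTrace : GoodPhi t (centeredTrace (Fin t)) := by
  refine ⟨fun A B _ _ α _ _ => ?_, fun A B _ _ hAB => ?_, centeredTrace_submatrix⟩
  · simp
  · simpa using centeredTrace_nonneg hAB

end Centering

section WeightedCentering

variable {n : Type*} [Fintype n]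

open scoped ComplexOrder in
theorem trace_conjTranspose_mul_mul_pos {m 𝕜 : Type*} [Fintype m] [RCLike 𝕜] {A : Matrix n n 𝕜}
    (hA : A.PosDef) {X : Matrix n m 𝕜} (hX : X ≠ 0) : 0 < (Xᴴ * A * X).trace := by
  have hpsd := hA.posSemidef.conjTranspose_mul_mul_same X
  refine hpsd.trace_nonneg.lt_of_ne' fun htrace => hX (ext_iff_mulVec.2 fun v => ?_)
  have hzero : star (X *ᵥ v) ⬝ᵥ A *ᵥ (X *ᵥ v) = 0 := by
    rw [mulVec_mulVec, star_mulVec, ← dotProduct_mulVec, mulVec_mulVec, ← Matrix.mul_assoc,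
      hpsd.trace_eq_zero_iff.1 htrace, zero_mulVec, dotProduct_zero]
  rw [zero_mulVec]
  by_contra hne
  exact (hA.dotProduct_mulVec_pos hne).ne' hzero

theorem Jmat_mul_mul_Jmat (A : Matrix n n ℝ) :
    Jmat n * A * Jmat n = (∑ i, ∑ j, A i j) • Jmat n := by
  ext i j
  rw [mul_apply]
  simp only [Jmat_mul_apply]
  simp [Jmat, Finset.sum_comm]

variable [DecidableEq n]

/-- The projection `x ↦ x - (1ᵀ A x / 1ᵀ A 1) 1` along the all-ones vector, which is orthogonal
for the form with matrix `A`. The conjugate of `A` by it is the paper's `B̃` for `A = Σ⁻¹`. -/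
noncomputable def weightedCentering (A : Matrix n n ℝ) : Matrix n n ℝ :=
  1 - (∑ i, ∑ j, A i j)⁻¹ • (Jmat n * A)

theorem weightedCentering_transpose_mul_mul {A : Matrix n n ℝ} (hA : A.IsSymm) :
    (weightedCentering A)ᵀ * A * weightedCentering A =
      A - (∑ i, ∑ j, A i j)⁻¹ • (A * Jmat n * A) := by
  set σ := ∑ i, ∑ j, A i j with hσ
  have hσσσ : σ⁻¹ * (σ⁻¹ * σ) = σ⁻¹ := by rcases eq_or_ne σ 0 with h | h <;> simp [h]
  have hAJAJA : A * (Jmat n * (A * (Jmat n * A))) = σ • (A * (Jmat n * A)) := by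
    have := congrArg (A * · * A) (Jmat_mul_mul_Jmat A)
    simpa only [Matrix.mul_assoc, Matrix.mul_smul, Matrix.smul_mul] using this
  simp only [weightedCentering, ← hσ, transpose_sub, transpose_one, transpose_smul, transpose_mul,
    transpose_Jmat, hA.eq, Matrix.sub_mul, Matrix.mul_sub, Matrix.one_mul, Matrix.mul_one,
    Matrix.smul_mul, Matrix.mul_smul, Matrix.mul_assoc, hAJAJA, smul_sub, smul_smul, hσσσ, sub_self,
    sub_zero]

theorem eq_of_weightedCentering_mul_eq_zero {m : Type*} {A : Matrix n n ℝ} {X : Matrix n m ℝ}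
    (h : weightedCentering A * X = 0) (q r : n) (k : m) : X q k = X r k := by
  rw [weightedCentering, Matrix.sub_mul, Matrix.one_mul, sub_eq_zero, Matrix.smul_mul,
    Matrix.mul_assoc] at h
  rw [h]
  simp [Jmat_mul_apply]

end WeightedCentering

section CompleteSymmetry

variable {C : Matrix (Fin t) (Fin t) ℝ}

theorem complSym_of_submatrix_perm (hC : ∀ σ : Equiv.Perm (Fin t), C.submatrix σ σ = C) :
    ComplSym C := by
  have entry_eq (σ : Equiv.Perm (Fin t)) (i j : Fin t) : C (σ i) (σ j) = C i j :=
    congrFun₂ (hC σ) i j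
  cases subsingleton_or_nontrivial (Fin t) with
  | inl _ =>
    refine ⟨C.trace, 0, ext fun i j => ?_⟩
    obtain rfl := Subsingleton.elim i j
    simp [trace, Fintype.sum_subsingleton _ i]
  | inr _ =>
    obtain ⟨i₀, j₀, h₀⟩ := exists_pair_ne (Fin t)
    refine ⟨C i₀ i₀ - C i₀ j₀, C i₀ j₀, ext fun i j => ?_⟩
    rcases eq_or_ne i j with rfl | hij
    · simpa [Jmat] using entry_eq (Equiv.swap i i₀) i₀ i₀
    · obtain ⟨σ, rfl, rfl⟩ := MulAction.is_two_pretransitive_iff.1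
        (Equiv.Perm.isMultiplyPretransitive (Fin t) 2) h₀ hij
      simpa [Jmat, one_apply, h₀] using entry_eq σ i₀ j₀

theorem ComplSym.Bmat_mul_eq_zero (hC : ComplSym C) (h : centeredTrace (Fin t) C = 0) :
    Bmat (Fin t) * C = 0 := by
  obtain ⟨α, β, rfl⟩ := hC
  have hmul : Bmat (Fin t) * (α • 1 + β • Jmat (Fin t)) = α • Bmat (Fin t) := by
    simp [Matrix.mul_add, Bmat_mul_Jmat]
  rw [centeredTrace_apply, hmul, trace_smul, smul_eq_zero, posSemidef_Bmat.trace_eq_zero_iff] at h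
  rw [hmul, smul_eq_zero]
  exact h

end CompleteSymmetry

section Relabeling

variable (W : Matrix (Plot a b) (Plot a b) ℝ) (σ : Equiv.Perm (Fin t)) (s : BlockArray a b t)

theorem submatrix_Tmat_comp : (Tmat (σ ∘ s)).submatrix id σ = Tmat s := by
  ext q k
  simp [Tmat]

theorem submatrix_Fmat_comp : (Fmat (σ ∘ s)).submatrix id σ = Fmat s := by
  rw [Fmat, Fmat, ← submatrix_Tmat_comp σ s]
  rfl

theorem submatrix_Cs00_comp : (Cs00 W (σ ∘ s)).submatrix σ σ = Cs00 W s := by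
  rw [Cs00, Cs00, ← submatrix_Tmat_comp σ s]
  rfl

theorem submatrix_Cs01_comp : (Cs01 W (σ ∘ s)).submatrix σ σ = Cs01 W s := by
  rw [Cs01, Cs01, ← submatrix_Tmat_comp σ s, ← submatrix_Fmat_comp σ s]
  rfl

theorem submatrix_Cs11_comp : (Cs11 W (σ ∘ s)).submatrix σ σ = Cs11 W s := by
  rw [Cs11, Cs11, ← submatrix_Fmat_comp σ s]
  rfl

theorem cs00_comp : cs00 W (σ ∘ s) = cs00 W s :=
  (centeredTrace_submatrix σ _).symm.trans (congrArg _ (submatrix_Cs00_comp W σ s))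

theorem cs01_comp : cs01 W (σ ∘ s) = cs01 W s :=
  (centeredTrace_submatrix σ _).symm.trans (congrArg _ (submatrix_Cs01_comp W σ s))

theorem cs11_comp : cs11 W (σ ∘ s) = cs11 W s :=
  (centeredTrace_submatrix σ _).symm.trans (congrArg _ (submatrix_Cs11_comp W σ s))

theorem sum_perm_comp {M : Type*} [AddCommMonoid M] (f : BlockArray a b t → M) :
    ∑ s : BlockArray a b t, f (σ ∘ s) = ∑ s, f s :=
  ((Equiv.refl (Plot a b)).arrowCongr σ).sum_comp f

end Relabeling

section Symmetrization

open scoped BigOperators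

variable {ξ : BlockArray a b t → ℝ}

/-- The average of a measure over all relabelings of the treatments: the symmetric measure with
the same numbers `c_{ξuv}`. -/
noncomputable def symmetrize (ξ : BlockArray a b t → ℝ) (s : BlockArray a b t) : ℝ :=
  𝔼 σ : Equiv.Perm (Fin t), ξ (σ ∘ s)

theorem sum_symmetrize_mul (ξ : BlockArray a b t → ℝ) {c : BlockArray a b t → ℝ}
    (hc : ∀ (σ : Equiv.Perm (Fin t)) s, c (σ ∘ s) = c s) :
    ∑ s, symmetrize ξ s * c s = ∑ s, ξ s * c s := by
  calc ∑ s, symmetrize ξ s * c s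
      = ∑ s, 𝔼 σ : Equiv.Perm (Fin t), ξ (σ ∘ s) * c (σ ∘ s) := by
        simp only [symmetrize, Finset.expect_mul, hc]
    _ = 𝔼 σ : Equiv.Perm (Fin t), ∑ s : BlockArray a b t, ξ (σ ∘ s) * c (σ ∘ s) :=
        (Finset.expect_sum_comm ..).symm
    _ = 𝔼 _σ : Equiv.Perm (Fin t), ∑ s, ξ s * c s := by
        simp only [sum_perm_comp _ fun s => ξ s * c s]
    _ = ∑ s, ξ s * c s := Fintype.expect_const _

theorem IsMeasure.symmetrize (hξ : IsMeasure ξ) : IsMeasure (symmetrize ξ) :=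
  ⟨fun _ => Finset.expect_nonneg fun _ _ => hξ.1 _, by
    simpa [hξ.2] using sum_symmetrize_mul ξ (c := 1) fun _ _ => rfl⟩

theorem isSymmetricMeasure_symmetrize (ξ : BlockArray a b t → ℝ) :
    IsSymmetricMeasure (symmetrize ξ) := fun τ _ =>
  Fintype.expect_equiv (Equiv.mulRight τ) _ _ fun _ => rfl

variable (W : Matrix (Plot a b) (Plot a b) ℝ) (ξ)

theorem cm00_symmetrize : cm00 W (symmetrize ξ) = cm00 W ξ := sum_symmetrize_mul ξ (cs00_comp W)

theorem cm01_symmetrize : cm01 W (symmetrize ξ) = cm01 W ξ := sum_symmetrize_mul ξ (cs01_comp W)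

theorem cm11_symmetrize : cm11 W (symmetrize ξ) = cm11 W ξ := sum_symmetrize_mul ξ (cs11_comp W)

variable {ξ}

theorem IsSymmetricMeasure.complSym_sum_smul (hξ : IsSymmetricMeasure ξ)
    {C : BlockArray a b t → Matrix (Fin t) (Fin t) ℝ}
    (hC : ∀ (σ : Equiv.Perm (Fin t)) s, (C (σ ∘ s)).submatrix σ σ = C s) :
    ComplSym (∑ s, ξ s • C s) := by
  refine complSym_of_submatrix_perm fun σ => ?_
  calc (∑ s, ξ s • C s).submatrix σ σ
      = (∑ s : BlockArray a b t, ξ (σ ∘ s) • C (σ ∘ s)).submatrix σ σ := by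
        rw [sum_perm_comp σ fun s => ξ s • C s]
    _ = ∑ s : BlockArray a b t, ξ (σ ∘ s) • (C (σ ∘ s)).submatrix σ σ := by
        ext; simp [Matrix.sum_apply]
    _ = ∑ s, ξ s • C s :=
        Finset.sum_congr rfl fun s _ => congrArg₂ (· • ·) (hξ σ s) (hC σ s)

theorem IsSymmetricMeasure.complSym_Cm01_add_smul_Cm11 (hξ : IsSymmetricMeasure ξ) (x : ℝ) :
    ComplSym (Cm01 W ξ + x • Cm11 W ξ) := by
  have := hξ.complSym_sum_smul (C := fun s => Cs01 W s + x • Cs11 W s) fun σ s => by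
    simp [submatrix_add, submatrix_smul, submatrix_Cs01_comp, submatrix_Cs11_comp]
  simpa [Cm01, Cm11, Finset.sum_add_distrib, Finset.smul_sum, smul_comm x] using this

end Symmetrization

section InformationMatrix

variable {W : Matrix (Plot a b) (Plot a b) ℝ} {ξ : BlockArray a b t → ℝ}
  {G : Matrix (Fin t) (Fin t) ℝ}

theorem posSemidef_fromBlocks_Cs (hW : W.PosSemidef) (s : BlockArray a b t) :
    (fromBlocks (Cs00 W s) (Cs01 W s) (Cs01 W s)ᵀ (Cs11 W s)).PosSemidef := by
  have hWt : Wᵀ = W := isHermitian_iff_isSymm.1 hW.isHermitian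
  convert hW.conjTranspose_mul_mul_same (fromCols (Tmat s) (Fmat s)) using 1
  rw [conjTranspose_fromCols_eq_fromRows_conjTranspose, fromRows_mul, fromRows_mul_fromCols]
  simp [Cs00, Cs01, Cs11, transpose_mul, hWt, Matrix.mul_assoc,
    conjTranspose_eq_transpose_of_trivial]

theorem posSemidef_fromBlocks_Cm (hW : W.PosSemidef) (hξ : IsMeasure ξ) :
    (fromBlocks (Cm00 W ξ) (Cm01 W ξ) (Cm01 W ξ)ᵀ (Cm11 W ξ)).PosSemidef := by
  have hsum : fromBlocks (Cm00 W ξ) (Cm01 W ξ) (Cm01 W ξ)ᵀ (Cm11 W ξ) =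
      ∑ s, ξ s • fromBlocks (Cs00 W s) (Cs01 W s) (Cs01 W s)ᵀ (Cs11 W s) := by
    ext (i | i) (j | j) <;> simp [Cm00, Cm01, Cm11, Matrix.sum_apply]
  rw [hsum]
  exact posSemidef_sum _ fun s _ => (posSemidef_fromBlocks_Cs hW s).smul (hξ.1 s)

theorem posSemidef_Cm11 (hW : W.PosSemidef) (hξ : IsMeasure ξ) : (Cm11 W ξ).PosSemidef :=
  (posSemidef_fromBlocks_Cm hW hξ).submatrix Sum.inr

theorem centeredTrace_Cm00 : centeredTrace (Fin t) (Cm00 W ξ) = cm00 W ξ := by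
  simp only [Cm00, map_sum, map_smul]
  rfl

theorem centeredTrace_Cm01 : centeredTrace (Fin t) (Cm01 W ξ) = cm01 W ξ := by
  simp only [Cm01, map_sum, map_smul]
  rfl

theorem centeredTrace_Cm11 : centeredTrace (Fin t) (Cm11 W ξ) = cm11 W ξ := by
  simp only [Cm11, map_sum, map_smul]
  rfl

/-- The average of the quadratics `q_s` with respect to the measure `ξ`. -/
noncomputable def qmean (W : Matrix (Plot a b) (Plot a b) ℝ) (ξ : BlockArray a b t → ℝ) (x : ℝ) :
    ℝ := ∑ s, ξ s * qpoly W s x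

theorem qmean_eq (x : ℝ) : qmean W ξ x = cm00 W ξ + 2 * cm01 W ξ * x + cm11 W ξ * x ^ 2 := by
  simp only [qmean, qpoly, cm00, cm01, cm11, Finset.mul_sum, Finset.sum_mul,
    ← Finset.sum_add_distrib]
  exact Finset.sum_congr rfl fun s _ => by ring

theorem qmean_symmetrize (x : ℝ) : qmean W (symmetrize ξ) x = qmean W ξ x := by
  simp only [qmean_eq, cm00_symmetrize, cm01_symmetrize, cm11_symmetrize]

theorem centeredTrace_InfoMat_add (hW : W.PosSemidef) (hξ : IsMeasure ξ)
    (hG : IsGenInv (Cm11 W ξ) G) (x : ℝ) :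
    centeredTrace (Fin t) (InfoMat W ξ G) +
      centeredTrace (Fin t) ((Cm01 W ξ * G + x • 1) * Cm11 W ξ * (Cm01 W ξ * G + x • 1)ᵀ) =
      qmean W ξ x := by
  have hD : (Cm11 W ξ).IsSymm := isHermitian_iff_isSymm.1 (posSemidef_Cm11 hW hξ).isHermitian
  rw [complete_square_of_mul_mul_eq hD
    (mul_mul_eq_of_posSemidef_fromBlocks (posSemidef_fromBlocks_Cm hW hξ) hG), InfoMat, qmean_eq,
    ← centeredTrace_Cm00, ← centeredTrace_Cm01, ← centeredTrace_Cm11]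
  simp only [transpose_smul, transpose_one, Matrix.mul_smul, Matrix.smul_mul, Matrix.mul_one,
    Matrix.one_mul, map_add, map_sub, map_smul, centeredTrace_transpose, smul_eq_mul]
  ring

theorem centeredTrace_InfoMat_le_qmean (hW : W.PosSemidef) (hξ : IsMeasure ξ)
    (hG : IsGenInv (Cm11 W ξ) G) (x : ℝ) :
    centeredTrace (Fin t) (InfoMat W ξ G) ≤ qmean W ξ x := by
  rw [← centeredTrace_InfoMat_add hW hξ hG x, ← conjTranspose_eq_transpose_of_trivial]
  exact le_add_of_nonneg_right
    (centeredTrace_nonneg ((posSemidef_Cm11 hW hξ).mul_mul_conjTranspose_same _))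

theorem centeredTrace_InfoMat_eq_qmean_of_Bmat_mul_eq_zero (hW : W.PosSemidef)
    (hξ : IsMeasure ξ) (hG : IsGenInv (Cm11 W ξ) G) {x : ℝ}
    (hx : Bmat (Fin t) * (Cm01 W ξ + x • Cm11 W ξ) = 0) :
    centeredTrace (Fin t) (InfoMat W ξ G) = qmean W ξ x := by
  have hmul : (Cm01 W ξ * G + x • 1) * Cm11 W ξ = Cm01 W ξ + x • Cm11 W ξ := by
    rw [Matrix.add_mul, Matrix.smul_mul, Matrix.one_mul,
      mul_mul_eq_of_posSemidef_fromBlocks (posSemidef_fromBlocks_Cm hW hξ) hG]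
  rw [← centeredTrace_InfoMat_add hW hξ hG x, hmul, centeredTrace_apply (_ * _),
    ← Matrix.mul_assoc, hx]
  simp

theorem IsSymmetricMeasure.centeredTrace_InfoMat_eq_qmean (hW : W.PosSemidef) (hξ : IsMeasure ξ)
    (hsymm : IsSymmetricMeasure ξ) (hG : IsGenInv (Cm11 W ξ) G) {x : ℝ}
    (hx : cm01 W ξ + x * cm11 W ξ = 0) :
    centeredTrace (Fin t) (InfoMat W ξ G) = qmean W ξ x := by
  refine centeredTrace_InfoMat_eq_qmean_of_Bmat_mul_eq_zero hW hξ hG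
    ((hsymm.complSym_Cm01_add_smul_Cm11 W x).Bmat_mul_eq_zero ?_)
  simpa [centeredTrace_Cm01, centeredTrace_Cm11] using hx

end InformationMatrix

section TraceOptimality

variable {W : Matrix (Plot a b) (Plot a b) ℝ} {ξ η : BlockArray a b t → ℝ}

/-- Optimality of a measure for the single criterion `C ↦ tr (B_t C)`, a weakening of universal
optimality. -/
def TraceOptimal (W : Matrix (Plot a b) (Plot a b) ℝ) (ξ : BlockArray a b t → ℝ) : Prop :=
  ∀ η : BlockArray a b t → ℝ, IsMeasure η →
    ∀ G H : Matrix (Fin t) (Fin t) ℝ, IsGenInv (Cm11 W ξ) G → IsGenInv (Cm11 W η) H →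
      centeredTrace (Fin t) (InfoMat W η H) ≤ centeredTrace (Fin t) (InfoMat W ξ G)

theorem UnivOptimal.traceOptimal (h : UnivOptimal W ξ) : TraceOptimal W ξ :=
  fun η hη G H hG hH => h η hη G H hG hH _ goodPhi_centeredTrace

theorem TraceOptimal.qmean_le (hopt : TraceOptimal W ξ) (hW : W.PosSemidef) (hξ : IsMeasure ξ)
    (hη : IsMeasure η) {x : ℝ} (hx : cm01 W η + x * cm11 W η = 0) (z : ℝ) :
    qmean W η x ≤ qmean W ξ z := by
  obtain ⟨G, hG⟩ := exists_mul_mul_eq_self (Cm11 W ξ)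
  obtain ⟨H, hH⟩ := exists_mul_mul_eq_self (Cm11 W (symmetrize η))
  calc qmean W η x
      = qmean W (symmetrize η) x := (qmean_symmetrize x).symm
    _ = centeredTrace (Fin t) (InfoMat W (symmetrize η) H) :=
        ((isSymmetricMeasure_symmetrize η).centeredTrace_InfoMat_eq_qmean hW hη.symmetrize hH
          (by rwa [cm01_symmetrize, cm11_symmetrize])).symm
    _ ≤ centeredTrace (Fin t) (InfoMat W ξ G) := hopt _ hη.symmetrize G H hG hH
    _ ≤ qmean W ξ z := centeredTrace_InfoMat_le_qmean hW hξ hG z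

end TraceOptimality

section MaxQuadratic

variable {W : Matrix (Plot a b) (Plot a b) ℝ} {ξ : BlockArray a b t → ℝ} {x : ℝ}

theorem qpoly_le_rfun (W : Matrix (Plot a b) (Plot a b) ℝ) (s : BlockArray a b t) (x : ℝ) :
    qpoly W s x ≤ rfun t W x :=
  le_csSup (Set.finite_range _).bddAbove (Set.mem_range_self s)

theorem exists_qpoly_eq_rfun [Nonempty (BlockArray a b t)] (W : Matrix (Plot a b) (Plot a b) ℝ)
    (x : ℝ) : ∃ s : BlockArray a b t, qpoly W s x = rfun t W x :=
  (Set.range_nonempty _).csSup_mem (Set.finite_range _)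

theorem hasDerivAt_qpoly (W : Matrix (Plot a b) (Plot a b) ℝ) (s : BlockArray a b t) (x : ℝ) :
    HasDerivAt (qpoly W s) (2 * (cs01 W s + x * cs11 W s)) x := by
  have := (((hasDerivAt_id x).const_mul (2 * cs01 W s)).const_add (cs00 W s)).add
    ((hasDerivAt_pow 2 x).const_mul (cs11 W s))
  exact this.congr_deriv (by push_cast; ring)

theorem exists_isMeasure_qmean_eq_rfun [Nonempty (BlockArray a b t)]
    (hx : ∀ z, rfun t W x ≤ rfun t W z) :
    ∃ η : BlockArray a b t → ℝ, IsMeasure η ∧ qmean W η x = rfun t W x ∧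
      cm01 W η + x * cm11 W η = 0 := by
  obtain ⟨η, hη, hval, hderiv⟩ := exists_mem_stdSimplex_sum_mul_deriv_eq_zero
    (fun s => hasDerivAt_qpoly W s x) (fun s => qpoly_le_rfun W s x)
    (.of_forall fun z => by
      obtain ⟨s, hs⟩ := exists_qpoly_eq_rfun (t := t) W z
      exact ⟨s, hs ▸ hx z⟩)
  refine ⟨η, hη, hval, ?_⟩
  have hsum : cm01 W η + x * cm11 W η = (∑ s, η s * (2 * (cs01 W s + x * cs11 W s))) / 2 := by
    rw [cm01, cm11, Finset.mul_sum, ← Finset.sum_add_distrib, Finset.sum_div]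
    exact Finset.sum_congr rfl fun s _ => by ring
  rw [hsum, hderiv, zero_div]

theorem IsMeasure.nonempty_blockArray (hξ : IsMeasure ξ) : Nonempty (BlockArray a b t) := by
  by_contra hempty
  rw [not_nonempty_iff] at hempty
  simpa using hξ.2

theorem IsMeasure.qmean_le_rfun (hξ : IsMeasure ξ) : qmean W ξ x ≤ rfun t W x := by
  calc qmean W ξ x
      ≤ ∑ s, ξ s * rfun t W x :=
        Finset.sum_le_sum fun s _ => mul_le_mul_of_nonneg_left (qpoly_le_rfun W s x) (hξ.1 s)
    _ = rfun t W x := by rw [← Finset.sum_mul, hξ.2, one_mul]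

theorem IsMeasure.qpoly_eq_rfun_of_qmean_eq (hξ : IsMeasure ξ) (h : qmean W ξ x = rfun t W x)
    {s : BlockArray a b t} (hs : 0 < ξ s) : qpoly W s x = rfun t W x := by
  have hsum : ∑ s, ξ s * qpoly W s x = ∑ s, ξ s * rfun t W x := by
    rw [← Finset.sum_mul, hξ.2, one_mul, ← h, qmean]
  have hterm := (Finset.sum_eq_sum_iff_of_le fun s _ =>
    mul_le_mul_of_nonneg_left (qpoly_le_rfun W s x) (hξ.1 s)).1 hsum s (Finset.mem_univ s)
  exact mul_left_cancel₀ hs.ne' hterm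

theorem qmean_eq_qstar_add (h : cm11 W ξ ≠ 0) (x : ℝ) :
    qmean W ξ x = qstar W ξ + cm11 W ξ * (x - -cm01 W ξ / cm11 W ξ) ^ 2 := by
  rw [qmean_eq, qstar]
  field_simp
  ring

theorem eq_of_forall_qmean_le (hpos : 0 < cm11 W ξ) (hmin : ∀ z, qmean W ξ x ≤ qmean W ξ z) :
    x = -cm01 W ξ / cm11 W ξ ∧ qstar W ξ = qmean W ξ x := by
  have hle := hmin (-cm01 W ξ / cm11 W ξ)
  have hx_eq := qmean_eq_qstar_add hpos.ne' x
  rw [hx_eq, qmean_eq_qstar_add hpos.ne', sub_self] at hle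
  have hsq : (x - -cm01 W ξ / cm11 W ξ) ^ 2 ≤ 0 := by nlinarith
  have hx : x = -cm01 W ξ / cm11 W ξ :=
    sub_eq_zero.1 (pow_eq_zero_iff two_ne_zero |>.1 (hsq.antisymm (sq_nonneg _)))
  refine ⟨hx, ?_⟩
  rw [hx_eq, ← hx, sub_self]
  ring

end MaxQuadratic

section NeighborCounts

open Finset

theorem card_neighbor (q : Plot a b) :
    #{r | Neighbor q r} = #{i : Fin a | q.1.val + 1 = i.val ∨ i.val + 1 = q.1.val} +
      #{j : Fin b | q.2.val + 1 = j.val ∨ j.val + 1 = q.2.val} := by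
  have hunion : ({r | Neighbor q r} : Finset (Plot a b)) =
      ({i | q.1.val + 1 = i.val ∨ i.val + 1 = q.1.val} : Finset (Fin a)) ×ˢ {q.2} ∪
        {q.1} ×ˢ ({j | q.2.val + 1 = j.val ∨ j.val + 1 = q.2.val} : Finset (Fin b)) := by
    ext r
    rw [mem_filter_univ, Neighbor]
    simp only [mem_filter_univ, mem_union, mem_product, mem_singleton, eq_comm (a := r.1),
      eq_comm (a := r.2)]
    tauto
  have hdisj : Disjoint
      (({i | q.1.val + 1 = i.val ∨ i.val + 1 = q.1.val} : Finset (Fin a)) ×ˢ {q.2})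
      ({q.1} ×ˢ ({j | q.2.val + 1 = j.val ∨ j.val + 1 = q.2.val} : Finset (Fin b))) := by
    refine disjoint_left.2 fun r hr hr' => ?_
    simp only [mem_product, mem_filter_univ, mem_singleton, Fin.ext_iff] at hr hr'
    omega
  rw [hunion, card_union_of_disjoint hdisj, card_product, card_product, card_singleton,
    card_singleton, mul_one, one_mul]

theorem card_neighbor_one_eq_card_neighbor_zero_add_one (hb : 3 ≤ b) (i : Fin a) :
    #{r : Plot a b | Neighbor (i, ⟨1, by omega⟩) r} =
      #{r : Plot a b | Neighbor (i, ⟨0, by omega⟩) r} + 1 := by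
  have hzero : ({j : Fin b | 0 + 1 = j.val ∨ j.val + 1 = 0} : Finset (Fin b)) =
      {⟨1, by omega⟩} := by
    ext j
    simp only [mem_filter_univ, mem_singleton, Fin.ext_iff]
    omega
  have hone : ({j : Fin b | 1 + 1 = j.val ∨ j.val + 1 = 1} : Finset (Fin b)) =
      {⟨0, by omega⟩, ⟨2, by omega⟩} := by
    ext j
    simp only [mem_filter_univ, mem_insert, mem_singleton, Fin.ext_iff]
    omega
  rw [card_neighbor, card_neighbor, hzero, hone, card_singleton, card_pair (by simp)]

theorem Fmat_apply (s : BlockArray a b t) (q : Plot a b) (k : Fin t) :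
    Fmat s q k = #{r | Neighbor q r ∧ s r = k} := by
  simp [Fmat, Mmat, Tmat, mul_apply, ← ite_and, and_comm]

theorem sum_Fmat (s : BlockArray a b t) (q : Plot a b) :
    ∑ k, Fmat s q k = #{r | Neighbor q r} := by
  simp only [Fmat_apply, ← filter_filter]
  rw [card_eq_sum_card_fiberwise (f := s) (t := univ) (by simp)]
  norm_cast

theorem dvd_card_neighbor_sub_card_neighbor {s : BlockArray a b t} {q r : Plot a b} {k : Fin t}
    (h : (Fmat s * Bmat (Fin t)) q k = (Fmat s * Bmat (Fin t)) r k) :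
    (t : ℤ) ∣ #{q' | Neighbor q q'} - #{r' | Neighbor r r'} := by
  have ht : (t : ℝ) ≠ 0 := by exact_mod_cast k.pos.ne'
  refine ⟨#{q' | Neighbor q q' ∧ s q' = k} - #{r' | Neighbor r r' ∧ s r' = k}, ?_⟩
  rw [mul_Bmat_apply, mul_Bmat_apply, sum_Fmat, sum_Fmat, Fmat_apply, Fmat_apply,
    Fintype.card_fin] at h
  field_simp at h
  have : (#{q' | Neighbor q q'} - #{r' | Neighbor r r'} : ℝ) =
    t * (#{q' | Neighbor q q' ∧ s q' = k} - #{r' | Neighbor r r' ∧ s r' = k}) := by linarith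
  exact_mod_cast this

end NeighborCounts

section PositiveDefiniteCovariance

variable {Sig : Matrix (Plot a b) (Plot a b) ℝ}

theorem Btilde_eq_weightedCentering_mul_mul (hSig : Sig.IsHermitian) :
    Btilde Sig = (weightedCentering Sig⁻¹)ᵀ * Sig⁻¹ * weightedCentering Sig⁻¹ :=
  (weightedCentering_transpose_mul_mul (isHermitian_iff_isSymm.1 hSig.inv)).symm

theorem posSemidef_Btilde (hSig : Sig.PosDef) : (Btilde Sig).PosSemidef := by
  rw [Btilde_eq_weightedCentering_mul_mul hSig.isHermitian,
    ← conjTranspose_eq_transpose_of_trivial]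
  exact hSig.inv.posSemidef.conjTranspose_mul_mul_same _

theorem centeredTrace_transpose_mul_Btilde_mul_pos (hSig : Sig.PosDef)
    {X : Matrix (Plot a b) (Fin t) ℝ} {q r : Plot a b} {k : Fin t}
    (hX : (X * Bmat (Fin t)) q k ≠ (X * Bmat (Fin t)) r k) :
    0 < centeredTrace (Fin t) (Xᵀ * Btilde Sig * X) := by
  have hne : weightedCentering Sig⁻¹ * (X * Bmat (Fin t)) ≠ 0 := fun h =>
    hX (eq_of_weightedCentering_mul_eq_zero h q r k)
  have hpos := trace_conjTranspose_mul_mul_pos hSig.inv hne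
  rw [centeredTrace_eq_trace_mul_mul_transpose,
    Btilde_eq_weightedCentering_mul_mul hSig.isHermitian]
  simpa only [conjTranspose_eq_transpose_of_trivial, transpose_mul, transpose_Bmat,
    Matrix.mul_assoc] using hpos

theorem cs11_Btilde_pos (hSig : Sig.PosDef) (ha : 0 < a) (hb : 3 ≤ b) (ht : 2 ≤ t)
    (s : BlockArray a b t) : 0 < cs11 (Btilde Sig) s := by
  refine centeredTrace_transpose_mul_Btilde_mul_pos hSig (q := (⟨0, ha⟩, ⟨1, by omega⟩))
    (r := (⟨0, ha⟩, ⟨0, by omega⟩)) (k := ⟨0, by omega⟩) fun h => ?_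
  have hdvd := dvd_card_neighbor_sub_card_neighbor h
  rw [card_neighbor_one_eq_card_neighbor_zero_add_one hb, Nat.cast_add_one, add_sub_cancel_left]
    at hdvd
  have := Int.le_of_dvd one_pos hdvd
  omega

theorem cm11_pos {W : Matrix (Plot a b) (Plot a b) ℝ} {ξ : BlockArray a b t → ℝ}
    (hξ : IsMeasure ξ) (hW : ∀ s : BlockArray a b t, 0 < cs11 W s) : 0 < cm11 W ξ := by
  obtain ⟨s, -, hs⟩ : ∃ s ∈ Finset.univ, 0 < ξ s :=
    Finset.exists_lt_of_sum_lt (by simp [hξ.2])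
  exact Finset.sum_pos' (fun s _ => mul_nonneg (hξ.1 s) (hW s).le)
    ⟨s, Finset.mem_univ s, mul_pos hs (hW s)⟩

end PositiveDefiniteCovariance

theorem univOptimal_support_subset_Q_general
    {W : Matrix (Plot a b) (Plot a b) ℝ} {ξ : BlockArray a b t → ℝ} {xstar ystar : ℝ}
    (hW : W.PosSemidef) (hx : ∀ y : ℝ, rfun t W xstar ≤ rfun t W y) (hy : ystar = rfun t W xstar)
    (hξ : IsMeasure ξ) (hpos : 0 < cm11 W ξ) (hopt : TraceOptimal W ξ) :
    qstar W ξ = ystar ∧ xstar = -(cm01 W ξ) / cm11 W ξ ∧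
      ∀ s : BlockArray a b t, 0 < ξ s → qpoly W s xstar = ystar := by
  subst hy
  have := hξ.nonempty_blockArray
  obtain ⟨η, hη, hη_val, hη_crit⟩ := exists_isMeasure_qmean_eq_rfun hx
  have hle (z : ℝ) : rfun t W xstar ≤ qmean W ξ z := hη_val ▸ hopt.qmean_le hW hξ hη hη_crit z
  have hval : qmean W ξ xstar = rfun t W xstar := hξ.qmean_le_rfun.antisymm (hle xstar)
  obtain ⟨hxstar, hqstar⟩ := eq_of_forall_qmean_le hpos fun z => hval ▸ hle z
  exact ⟨hqstar.trans hval, hxstar, fun s hs => hξ.qpoly_eq_rfun_of_qmean_eq hval hs⟩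

/-- Lemma `sym:point`: if a measure `ξ` is universally optimal then
`q*_ξ = y*`, `x* = −c_{ξ01}/c_{ξ11}`, and the support of `ξ` is contained in `Q`. -/
theorem univOptimal_support_subset_Q
    (a b t : ℕ) (ha : 2 ≤ a) (hab : a ≤ b) (hb : 3 ≤ b) (ht : 2 ≤ t)
    (Sig : Matrix (Plot a b) (Plot a b) ℝ) (hSig : Sig.PosDef)
    (xstar ystar : ℝ)
    (hx : ∀ y : ℝ, rfun t (Btilde Sig) xstar ≤ rfun t (Btilde Sig) y)
    (hy : ystar = rfun t (Btilde Sig) xstar)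
    (ξ : BlockArray a b t → ℝ) (hξ : IsMeasure ξ)
    (hopt : UnivOptimal (Btilde Sig) ξ) :
    qstar (Btilde Sig) ξ = ystar ∧
    xstar = -(cm01 (Btilde Sig) ξ) / cm11 (Btilde Sig) ξ ∧
    ∀ s : BlockArray a b t, 0 < ξ s → qpoly (Btilde Sig) s xstar = ystar :=
  univOptimal_support_subset_Q_general (posSemidef_Btilde hSig) hx hy hξ
    (cm11_pos hξ (cs11_Btilde_pos hSig (by omega) hb ht)) hopt.traceOptimal

end TwoDim
end

section
/- For every block array s the following identities hold: c_{s00} = p − h⁰⁰_s/p; c_{s01} = z¹_s − h¹_s/p; and c_{s11} = η + z²_s − h²_s/p − 2h³_s/p. -/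
open Matrix

namespace TwoDim

variable {a b t : ℕ}

/-!
For `X`, `Y` with rows indexed by plots, expanding both centering matrices in
`tr(B_t Xᵀ B_p Y)` leaves `tr(XᵀY)` and rank-one corrections depending only on the column sums,
the row sums and the totals of `X` and `Y`. The column sums of `T_s` and `F_s` are the
replication counts `f⁰` and `f¹ + f² + f³ + f⁴`, their row sums are `1` and the degree of the
plot in the grid, so the corrections are the `h`- and `η`-terms.

The main terms are `tr(T_sᵀ K T_s)` with `K = I, M, M²`: the sum of `K` over pairs of plots with
equal treatment. The grid is a Cartesian product of paths, `M = I ⊗ A_b + A_a ⊗ I`, whence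
`M² = D + I ⊗ (A_b² - D_b) + (A_a² - D_a) ⊗ I + 2 A_a ⊗ A_b` with `D` the degree matrices; its
three off-diagonal parts are the pairs at distance two in a row, in a column, and on a diagonal.
-/

section Centering

variable {m n : Type*} [Fintype m]

theorem Jmat_eq_vecMulVec (n : Type*) : Jmat n = vecMulVec 1 1 := by
  ext i j
  simp [Jmat, vecMulVec_apply]

theorem trace_Jmat_mul (Z : Matrix m m ℝ) : trace (Jmat m * Z) = (1 ᵥ* Z) ⬝ᵥ 1 := by
  rw [Jmat_eq_vecMulVec, vecMulVec_mul, trace_vecMulVec, dotProduct_comm]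

theorem transpose_mul_Jmat_mul (X Y : Matrix m n ℝ) :
    Xᵀ * Jmat m * Y = vecMulVec (1 ᵥ* X) (1 ᵥ* Y) := by
  rw [Jmat_eq_vecMulVec, mul_vecMulVec, vecMulVec_mul, mulVec_transpose]

variable [Fintype n]

theorem trace_Bmat_mul_transpose_mul_Bmat_mul [DecidableEq m] [DecidableEq n]
    (X Y : Matrix m n ℝ) :
    trace (Bmat n * (Xᵀ * Bmat m * Y)) =
      trace (Xᵀ * Y) - (1 ᵥ* X) ⬝ᵥ (1 ᵥ* Y) / Fintype.card m
        - (X *ᵥ 1) ⬝ᵥ (Y *ᵥ 1) / Fintype.card n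
        + (1 ⬝ᵥ X *ᵥ 1) * (1 ⬝ᵥ Y *ᵥ 1) / (Fintype.card m * Fintype.card n) := by
  have expand : Bmat n * (Xᵀ * Bmat m * Y) =
      Xᵀ * Y - (Fintype.card m : ℝ)⁻¹ • (Xᵀ * Jmat m * Y)
        - (Fintype.card n : ℝ)⁻¹ • (Jmat n * (Xᵀ * Y))
        + ((Fintype.card m : ℝ)⁻¹ * (Fintype.card n : ℝ)⁻¹) •
          (Jmat n * (Xᵀ * Jmat m * Y)) := by
    simp only [Bmat, Matrix.mul_sub, Matrix.sub_mul, Matrix.mul_one, Matrix.one_mul,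
      Matrix.smul_mul, Matrix.mul_smul, smul_sub, smul_smul]
    abel
  have rows : (1 ᵥ* (Xᵀ * Y)) ⬝ᵥ 1 = (X *ᵥ 1) ⬝ᵥ (Y *ᵥ 1) := by
    rw [← vecMul_vecMul, vecMul_transpose, ← dotProduct_mulVec]
  have totals : (1 ᵥ* vecMulVec (1 ᵥ* X) (1 ᵥ* Y)) ⬝ᵥ 1 =
      (1 ⬝ᵥ X *ᵥ 1) * (1 ⬝ᵥ Y *ᵥ 1) := by
    rw [vecMul_vecMulVec, smul_dotProduct, dotProduct_comm 1, ← dotProduct_mulVec,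
      ← dotProduct_mulVec, smul_eq_mul]
  rw [expand]
  simp only [trace_add, trace_sub, trace_smul, trace_Jmat_mul, transpose_mul_Jmat_mul,
    trace_vecMulVec, rows, totals, smul_eq_mul]
  ring

theorem trace_Bmat_mul_of_mulVec_one_eq_one [DecidableEq m] [DecidableEq n]
    {X : Matrix m n ℝ} (hX : X *ᵥ 1 = 1) (Y : Matrix m n ℝ) :
    trace (Bmat n * (Xᵀ * Bmat m * Y)) =
      trace (Xᵀ * Y) - (1 ᵥ* X) ⬝ᵥ (1 ᵥ* Y) / Fintype.card m := by
  rw [trace_Bmat_mul_transpose_mul_Bmat_mul, hX, one_dotProduct_one]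
  rcases isEmpty_or_nonempty m with _ | _
  · simp
  · rw [mul_div_mul_left _ _ (Nat.cast_ne_zero.mpr Fintype.card_ne_zero)]
    ring

end Centering

section Path

variable {n : ℕ}

/-- The shift by `d` steps along the path `0, …, n - 1`: entry `(i, j)` is `1` if `i + d = j`.
It relates each vertex to the one `d` steps ahead; the transpose looks back. -/
def shift (n d : ℕ) : Matrix (Fin n) (Fin n) ℝ :=
  Matrix.of fun i j => if i.val + d = j.val then 1 else 0

/-- The adjacency matrix of the path `0, …, n - 1`. -/
def pathAdj (n : ℕ) : Matrix (Fin n) (Fin n) ℝ :=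
  shift n 1 + (shift n 1)ᵀ

/-- The number of neighbors in the path `0, …, n - 1`, as successor plus predecessor count. -/
def pathDegree (n : ℕ) (i : Fin n) : ℝ :=
  (if i.val + 1 < n then 1 else 0) + if 1 ≤ i.val then 1 else 0

theorem shift_mulVec (d : ℕ) (v : Fin n → ℝ) (i : Fin n) :
    (shift n d *ᵥ v) i = if h : i.val + d < n then v ⟨i + d, h⟩ else 0 := by
  split_ifs with h
  · have key (j : Fin n) : i.val + d = j.val ↔ (⟨i + d, h⟩ : Fin n) = j := by
      rw [Fin.ext_iff]
    simp [mulVec, dotProduct, shift, key]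
  · have key (j : Fin n) : i.val + d ≠ j.val := by lia
    simp [mulVec, dotProduct, shift, key]

theorem transpose_shift_mulVec (d : ℕ) (v : Fin n → ℝ) (i : Fin n) :
    ((shift n d)ᵀ *ᵥ v) i = if d ≤ i.val then v ⟨i - d, by lia⟩ else 0 := by
  split_ifs with h
  · have key (j : Fin n) : j.val + d = i.val ↔ (⟨i - d, by lia⟩ : Fin n) = j := by
      rw [Fin.ext_iff]
      lia
    simp [mulVec, dotProduct, shift, key]
  · have key (j : Fin n) : j.val + d ≠ i.val := by lia
    simp [mulVec, dotProduct, shift, key]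

theorem shift_mul_shift (n d e : ℕ) : shift n d * shift n e = shift n (d + e) := by
  ext i j
  change (shift n d *ᵥ fun k => shift n e k j) i = _
  rw [shift_mulVec]
  simp only [shift, of_apply]
  split_ifs <;> first | rfl | lia

theorem shift_mul_transpose_shift (n d : ℕ) :
    shift n d * (shift n d)ᵀ = diagonal (shift n d *ᵥ 1) := by
  ext i j
  change (shift n d *ᵥ fun k => shift n d j k) i = _
  rw [diagonal_apply, shift_mulVec, shift_mulVec]
  simp only [shift, of_apply, Fin.ext_iff, Pi.one_apply]
  split_ifs <;> first | rfl | lia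

theorem transpose_shift_mul_shift (n d : ℕ) :
    (shift n d)ᵀ * shift n d = diagonal ((shift n d)ᵀ *ᵥ 1) := by
  ext i j
  change ((shift n d)ᵀ *ᵥ fun k => shift n d k j) i = _
  rw [diagonal_apply, transpose_shift_mulVec, transpose_shift_mulVec]
  simp only [shift, of_apply, Fin.ext_iff, Pi.one_apply]
  split_ifs <;> first | rfl | lia

theorem pathAdj_isSymm (n : ℕ) : (pathAdj n).IsSymm :=
  isSymm_add_transpose_self _

theorem pathAdj_mulVec_one (n : ℕ) : pathAdj n *ᵥ 1 = pathDegree n := by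
  ext i
  simp [pathAdj, add_mulVec, shift_mulVec, transpose_shift_mulVec, pathDegree]

theorem pathAdj_mul_self (n : ℕ) :
    pathAdj n * pathAdj n = diagonal (pathDegree n) + (shift n 2 + (shift n 2)ᵀ) := by
  have transpose_sq : (shift n 1)ᵀ * (shift n 1)ᵀ = (shift n 2)ᵀ := by
    rw [← transpose_mul, shift_mul_shift]
  have degree : diagonal (pathDegree n) =
      diagonal (shift n 1 *ᵥ 1) + diagonal ((shift n 1)ᵀ *ᵥ 1) := by
    rw [← pathAdj_mulVec_one, pathAdj, add_mulVec]
    exact (diagonal_add _ _).symm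
  rw [degree, pathAdj, add_mul, mul_add, mul_add, shift_mul_shift, transpose_sq,
    shift_mul_transpose_shift, transpose_shift_mul_shift]
  abel

theorem sum_pathDegree (hn : n ≠ 0) : ∑ i, pathDegree n i = 2 * (n : ℝ) - 2 := by
  obtain ⟨m, rfl⟩ := Nat.exists_eq_succ_of_ne_zero hn
  have successors : ∑ i : Fin (m + 1), (if i.val + 1 < m + 1 then (1 : ℝ) else 0) = m := by
    rw [Fin.sum_univ_castSucc]
    simp
  have predecessors : ∑ i : Fin (m + 1), (if 1 ≤ i.val then (1 : ℝ) else 0) = m := by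
    rw [Fin.sum_univ_succ]
    simp
  simp only [pathDegree, Finset.sum_add_distrib, Nat.succ_eq_add_one, successors, predecessors]
  push_cast
  ring

theorem sum_pathDegree_sq (hn : 2 ≤ n) : ∑ i, pathDegree n i ^ 2 = 4 * (n : ℝ) - 6 := by
  -- All degrees are `1` or `2`, the roots of `x ^ 2 - 3 * x + 2`.
  have degree_sq (i : Fin n) : pathDegree n i ^ 2 = 3 * pathDegree n i - 2 := by
    unfold pathDegree
    split_ifs <;> first | lia | norm_num
  simp only [degree_sq, Finset.sum_sub_distrib, ← Finset.mul_sum,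
    sum_pathDegree (show n ≠ 0 by lia), Finset.sum_const, Finset.card_univ, Fintype.card_fin,
    nsmul_eq_mul]
  ring

end Path

section Grid

open scoped Kronecker

/-- The number of neighbors of a plot. -/
def gridDegree (q : Plot a b) : ℝ :=
  pathDegree a q.1 + pathDegree b q.2

theorem Mmat_eq_kronecker (a b : ℕ) : Mmat a b = 1 ⊗ₖ pathAdj b + pathAdj a ⊗ₖ 1 := by
  ext ⟨i, j⟩ ⟨k, l⟩
  simp only [Mmat, Neighbor, pathAdj, shift, of_apply, Matrix.add_apply, transpose_apply,
    kronecker_apply, one_apply, Fin.ext_iff]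
  split_ifs <;> first | lia | norm_num

theorem Mmat_isSymm (a b : ℕ) : (Mmat a b).IsSymm := by
  rw [Mmat_eq_kronecker, IsSymm, transpose_add, ← kroneckerMap_transpose,
    ← kroneckerMap_transpose, (pathAdj_isSymm a).eq, (pathAdj_isSymm b).eq, transpose_one,
    transpose_one]

theorem Mmat_mulVec_one (a b : ℕ) : Mmat a b *ᵥ 1 = gridDegree := by
  ext ⟨i, j⟩
  simp only [Mmat_eq_kronecker, gridDegree, ← pathAdj_mulVec_one, mulVec, dotProduct,
    Matrix.add_apply, kronecker_apply, one_apply, Fintype.sum_prod_type]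
  simp [Finset.sum_add_distrib, add_comm]

theorem Mmat_mul_self (a b : ℕ) :
    Mmat a b * Mmat a b = diagonal gridDegree + 1 ⊗ₖ (shift b 2 + (shift b 2)ᵀ)
      + (shift a 2 + (shift a 2)ᵀ) ⊗ₖ 1 + (2 : ℝ) • pathAdj a ⊗ₖ pathAdj b := by
  have degree : diagonal (gridDegree : Plot a b → ℝ) =
      1 ⊗ₖ diagonal (pathDegree b) + diagonal (pathDegree a) ⊗ₖ 1 := by
    simp only [← diagonal_one, diagonal_kronecker_diagonal, diagonal_add, one_mul, mul_one]
    congr 1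
    ext q
    exact add_comm _ _
  rw [degree, Mmat_eq_kronecker, add_mul, mul_add, mul_add]
  simp only [← mul_kronecker_mul, one_mul, mul_one, pathAdj_mul_self, kronecker_add,
    add_kronecker, two_smul]
  abel

theorem sum_gridDegree (ha : a ≠ 0) (hb : b ≠ 0) :
    ∑ q : Plot a b, gridDegree q = 2 * (2 * (a : ℝ) * b - a - b) := by
  simp only [gridDegree, Fintype.sum_prod_type, Finset.sum_add_distrib, Finset.sum_const,
    Finset.card_univ, Fintype.card_fin, nsmul_eq_mul, ← Finset.mul_sum, sum_pathDegree ha,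
    sum_pathDegree hb]
  ring

theorem sum_gridDegree_sq (ha : 2 ≤ a) (hb : 2 ≤ b) :
    ∑ q : Plot a b, gridDegree q ^ 2 = 2 * (8 * (a : ℝ) * b - 7 * a - 7 * b + 4) := by
  simp only [gridDegree, add_sq, Fintype.sum_prod_type, Finset.sum_add_distrib, Finset.sum_const,
    Finset.card_univ, Fintype.card_fin, nsmul_eq_mul, ← Finset.mul_sum, ← Finset.sum_mul,
    sum_pathDegree (show a ≠ 0 by lia), sum_pathDegree (show b ≠ 0 by lia),
    sum_pathDegree_sq ha, sum_pathDegree_sq hb]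
  ring

end Grid

section Replication

theorem natCast_ncard_setOf {α : Type*} [Fintype α] (P : α → Prop) [DecidablePred P] :
    ({x | P x}.ncard : ℝ) = ∑ x, if P x then 1 else 0 := by
  rw [Set.ncard_eq_toFinset_card', Set.toFinset_ofPred, Finset.natCast_card_filter]

variable (s : BlockArray a b t)

theorem Tmat_mulVec_one : Tmat s *ᵥ 1 = 1 := by
  ext q
  simp [mulVec, dotProduct, Tmat]

theorem Fmat_mulVec_one : Fmat s *ᵥ 1 = gridDegree := by
  rw [Fmat, ← mulVec_mulVec, Tmat_mulVec_one, Mmat_mulVec_one]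

theorem vecMul_Tmat (w : Plot a b → ℝ) (k : Fin t) :
    (w ᵥ* Tmat s) k = ∑ q, if s q = k then w q else 0 := by
  simp [vecMul, dotProduct, Tmat]

theorem one_vecMul_Tmat (k : Fin t) : (1 ᵥ* Tmat s) k = f0 s k := by
  rw [vecMul_Tmat, f0, natCast_ncard_setOf]
  rfl

theorem one_vecMul_Fmat (k : Fin t) :
    (1 ᵥ* Fmat s) k = f1 s k + f2 s k + f3 s k + f4 s k := by
  have one_vecMul_Mmat : 1 ᵥ* Mmat a b = gridDegree := by
    rw [← mulVec_transpose, (Mmat_isSymm a b).eq, Mmat_mulVec_one]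
  rw [Fmat, ← vecMul_vecMul, one_vecMul_Mmat, vecMul_Tmat]
  simp only [f1, f2, f3, f4, natCast_ncard_setOf, ite_and, ← Finset.sum_add_distrib]
  refine Finset.sum_congr rfl fun q _ => ?_
  by_cases h : s q = k
  · simp only [h, if_true, gridDegree, pathDegree]
    ring
  · simp only [h, if_false, add_zero]

theorem one_vecMul_Tmat_dotProduct_self : (1 ᵥ* Tmat s) ⬝ᵥ (1 ᵥ* Tmat s) = h00 s := by
  simp only [dotProduct, one_vecMul_Tmat, h00, hval, fc]

theorem one_vecMul_Tmat_dotProduct_Fmat : (1 ᵥ* Tmat s) ⬝ᵥ (1 ᵥ* Fmat s) = h1 s := by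
  simp only [dotProduct, one_vecMul_Tmat, one_vecMul_Fmat, h1, hval, fc, mul_add,
    Finset.sum_add_distrib]

theorem one_vecMul_Fmat_dotProduct_self :
    (1 ᵥ* Fmat s) ⬝ᵥ (1 ᵥ* Fmat s) = h2 s + 2 * h3 s := by
  simp only [dotProduct, one_vecMul_Fmat, h2, h3, hval, fc, ← Finset.sum_add_distrib,
    Finset.mul_sum]
  exact Finset.sum_congr rfl fun k _ => by ring

end Replication

section Concurrence

open scoped Kronecker

variable (s : BlockArray a b t)

/-- The sum of the entries `K q r` over the ordered pairs of plots `q`, `r` with the same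
treatment, as the linear functional `K ↦ tr(T_sᵀ K T_s)`. -/
def concurrence : Matrix (Plot a b) (Plot a b) ℝ →ₗ[ℝ] ℝ where
  toFun K := trace ((Tmat s)ᵀ * K * Tmat s)
  map_add' K L := by rw [Matrix.mul_add, Matrix.add_mul, trace_add]
  map_smul' c K := by simp

theorem concurrence_def (K : Matrix (Plot a b) (Plot a b) ℝ) :
    concurrence s K = trace ((Tmat s)ᵀ * K * Tmat s) :=
  rfl

theorem concurrence_eq_sum (K : Matrix (Plot a b) (Plot a b) ℝ) :
    concurrence s K = ∑ q, ∑ r, if s q = s r then K q r else 0 := by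
  have Tmat_mul_transpose : Tmat s * (Tmat s)ᵀ = of fun r q => if s q = s r then 1 else 0 := by
    ext r q
    simp [mul_apply, Tmat, eq_comm]
  rw [concurrence_def, trace_mul_comm, ← Matrix.mul_assoc, Tmat_mul_transpose, trace_mul_comm]
  simp [trace, mul_apply]

theorem concurrence_transpose (K : Matrix (Plot a b) (Plot a b) ℝ) :
    concurrence s Kᵀ = concurrence s K := by
  rw [concurrence_def, ← trace_transpose]
  simp only [transpose_mul, transpose_transpose, concurrence_def, Matrix.mul_assoc]

theorem concurrence_diagonal (d : Plot a b → ℝ) : concurrence s (diagonal d) = ∑ q, d q := by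
  rw [concurrence_eq_sum]
  refine Finset.sum_congr rfl fun q _ => ?_
  rw [Finset.sum_eq_single q] <;> simp +contextual [eq_comm]

theorem concurrence_kronecker_add_transpose {A : Matrix (Fin a) (Fin a) ℝ} (hA : A.IsSymm)
    (B : Matrix (Fin b) (Fin b) ℝ) :
    concurrence s (A ⊗ₖ (B + Bᵀ)) = 2 * concurrence s (A ⊗ₖ B) := by
  have swap : A ⊗ₖ Bᵀ = (A ⊗ₖ B)ᵀ := by rw [← kroneckerMap_transpose, hA.eq]
  rw [kronecker_add, map_add, swap, concurrence_transpose, two_mul]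

theorem concurrence_add_transpose_kronecker (A : Matrix (Fin a) (Fin a) ℝ)
    {B : Matrix (Fin b) (Fin b) ℝ} (hB : B.IsSymm) :
    concurrence s ((A + Aᵀ) ⊗ₖ B) = 2 * concurrence s (A ⊗ₖ B) := by
  have swap : Aᵀ ⊗ₖ B = (A ⊗ₖ B)ᵀ := by rw [← kroneckerMap_transpose, hB.eq]
  rw [add_kronecker, map_add, swap, concurrence_transpose, two_mul]

theorem concurrence_kronecker_indicator (P : Fin a → Fin a → Prop) (Q : Fin b → Fin b → Prop)
    [DecidableRel P] [DecidableRel Q] :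
    concurrence s ((of fun i k => if P i k then 1 else 0) ⊗ₖ
        (of fun j l => if Q j l then 1 else 0)) =
      {qr : Plot a b × Plot a b |
        P qr.1.1 qr.2.1 ∧ Q qr.1.2 qr.2.2 ∧ s qr.1 = s qr.2}.ncard := by
  rw [natCast_ncard_setOf, Fintype.sum_prod_type, concurrence_eq_sum]
  refine Finset.sum_congr rfl fun q _ => Finset.sum_congr rfl fun r _ => ?_
  by_cases hP : P q.1 r.1 <;> by_cases hQ : Q q.2 r.2 <;> simp [hP, hQ]

theorem concurrence_one_kronecker_shift_one :
    concurrence s (1 ⊗ₖ shift b 1) = zr1 s :=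
  concurrence_kronecker_indicator s (· = ·) (fun j l => j.val + 1 = l.val)

theorem concurrence_one_kronecker_shift_two :
    concurrence s (1 ⊗ₖ shift b 2) = zr2 s :=
  concurrence_kronecker_indicator s (· = ·) (fun j l => j.val + 2 = l.val)

theorem concurrence_shift_one_kronecker_one :
    concurrence s (shift a 1 ⊗ₖ 1) = zc1 s := by
  simp only [zc1, and_left_comm (a := _ = (_ : Fin b))]
  exact concurrence_kronecker_indicator s (fun i k => i.val + 1 = k.val) (· = ·)

theorem concurrence_shift_two_kronecker_one :
    concurrence s (shift a 2 ⊗ₖ 1) = zc2 s := by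
  simp only [zc2, and_left_comm (a := _ = (_ : Fin b))]
  exact concurrence_kronecker_indicator s (fun i k => i.val + 2 = k.val) (· = ·)

theorem concurrence_transpose_shift_kronecker_shift :
    concurrence s ((shift a 1)ᵀ ⊗ₖ shift b 1) = zd1 s :=
  concurrence_kronecker_indicator s (fun i k => k.val + 1 = i.val) (fun j l => j.val + 1 = l.val)

theorem concurrence_shift_kronecker_shift :
    concurrence s (shift a 1 ⊗ₖ shift b 1) = zd2 s :=
  concurrence_kronecker_indicator s (fun i k => i.val + 1 = k.val) (fun j l => j.val + 1 = l.val)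

theorem concurrence_Mmat : concurrence s (Mmat a b) = z1 s := by
  rw [Mmat_eq_kronecker, map_add, pathAdj, pathAdj,
    concurrence_kronecker_add_transpose s isSymm_one,
    concurrence_add_transpose_kronecker s _ isSymm_one, concurrence_one_kronecker_shift_one,
    concurrence_shift_one_kronecker_one, z1]

theorem concurrence_pathAdj_kronecker_pathAdj :
    concurrence s (pathAdj a ⊗ₖ pathAdj b) = 2 * zd1 s + 2 * zd2 s := by
  rw [pathAdj.eq_def b, concurrence_kronecker_add_transpose s (pathAdj_isSymm a), pathAdj,
    add_kronecker, map_add, concurrence_shift_kronecker_shift,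
    concurrence_transpose_shift_kronecker_shift]
  ring

theorem concurrence_Mmat_mul_self :
    concurrence s (Mmat a b * Mmat a b) = ∑ q : Plot a b, gridDegree q + z2 s := by
  rw [Mmat_mul_self, map_add, map_add, map_add, map_smul, concurrence_diagonal,
    concurrence_kronecker_add_transpose s isSymm_one,
    concurrence_add_transpose_kronecker s _ isSymm_one, concurrence_one_kronecker_shift_two,
    concurrence_shift_two_kronecker_one, concurrence_pathAdj_kronecker_pathAdj, z2, smul_eq_mul]
  ring

theorem trace_transpose_Tmat_mul_Tmat : trace ((Tmat s)ᵀ * Tmat s) = (a : ℝ) * b := by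
  rw [← Matrix.mul_one (Tmat s)ᵀ, ← concurrence_def, ← diagonal_one, concurrence_diagonal]
  simp

theorem trace_transpose_Tmat_mul_Fmat : trace ((Tmat s)ᵀ * Fmat s) = z1 s := by
  rw [Fmat, ← Matrix.mul_assoc, ← concurrence_def, concurrence_Mmat]

theorem trace_transpose_Fmat_mul_Fmat :
    trace ((Fmat s)ᵀ * Fmat s) = ∑ q : Plot a b, gridDegree q + z2 s := by
  rw [← concurrence_Mmat_mul_self, concurrence_def, Fmat, transpose_mul, (Mmat_isSymm a b).eq]
  simp only [Matrix.mul_assoc]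

end Concurrence

theorem card_plot (a b : ℕ) : (Fintype.card (Plot a b) : ℝ) = a * b := by
  simp

theorem cs00_Bmat (s : BlockArray a b t) :
    cs00 (Bmat (Plot a b)) s = (a : ℝ) * b - h00 s / ((a : ℝ) * b) := by
  rw [cs00, Cs00, trace_Bmat_mul_of_mulVec_one_eq_one (Tmat_mulVec_one s),
    trace_transpose_Tmat_mul_Tmat, one_vecMul_Tmat_dotProduct_self, card_plot]

theorem cs01_Bmat (s : BlockArray a b t) :
    cs01 (Bmat (Plot a b)) s = z1 s - h1 s / ((a : ℝ) * b) := by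
  rw [cs01, Cs01, trace_Bmat_mul_of_mulVec_one_eq_one (Tmat_mulVec_one s),
    trace_transpose_Tmat_mul_Fmat, one_vecMul_Tmat_dotProduct_Fmat, card_plot]

theorem cs11_Bmat (ha : 2 ≤ a) (hb : 2 ≤ b) (s : BlockArray a b t) :
    cs11 (Bmat (Plot a b)) s
      = eta a b t + z2 s - h2 s / ((a : ℝ) * b) - 2 * h3 s / ((a : ℝ) * b) := by
  have total : (1 : Plot a b → ℝ) ⬝ᵥ gridDegree = 2 * (2 * (a : ℝ) * b - a - b) := by
    rw [one_dotProduct, sum_gridDegree (by lia) (by lia)]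
  have squares : (gridDegree : Plot a b → ℝ) ⬝ᵥ gridDegree =
      2 * (8 * (a : ℝ) * b - 7 * a - 7 * b + 4) := by
    simp only [dotProduct, ← sq, sum_gridDegree_sq ha hb]
  rw [cs11, Cs11, trace_Bmat_mul_transpose_mul_Bmat_mul, trace_transpose_Fmat_mul_Fmat,
    one_vecMul_Fmat_dotProduct_self, Fmat_mulVec_one, squares, ← one_dotProduct, total,
    card_plot, Fintype.card_fin, eta]
  ring

theorem cs_coefficients_general (ha : 2 ≤ a) (hb : 2 ≤ b) (s : BlockArray a b t) :
    cs00 (Bmat (Plot a b)) s = ((a : ℝ) * b) - h00 s / ((a : ℝ) * b) ∧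
    cs01 (Bmat (Plot a b)) s = z1 s - h1 s / ((a : ℝ) * b) ∧
    cs11 (Bmat (Plot a b)) s
      = eta a b t + z2 s - h2 s / ((a : ℝ) * b) - 2 * h3 s / ((a : ℝ) * b) :=
  ⟨cs00_Bmat s, cs01_Bmat s, cs11_Bmat ha hb s⟩

/-- Lemma `core parameters`: explicit expressions for `c_{s00}`, `c_{s01}`
and `c_{s11}` when `B̃ = B_p`. -/
theorem cs_coefficients
    (a b t : ℕ) (ha : 2 ≤ a) (hab : a ≤ b) (ht : 2 ≤ t)
    (s : BlockArray a b t) :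
    cs00 (Bmat (Plot a b)) s = ((a : ℝ) * b) - h00 s / ((a : ℝ) * b) ∧
    cs01 (Bmat (Plot a b)) s = z1 s - h1 s / ((a : ℝ) * b) ∧
    cs11 (Bmat (Plot a b)) s
      = eta a b t + z2 s - h2 s / ((a : ℝ) * b) - 2 * h3 s / ((a : ℝ) * b) :=
  cs_coefficients_general ha (ha.trans hab) s

end TwoDim
end
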